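/- Let g : ℂ → ℂ be a smooth function with compact support, and suppose the support of g is contained in ℂ∖{0}. Then there exists a smooth function f : ℂ → ℂ with compact support contained in ℂ∖{0} such that ∂̄f = g if and only if ∫_ℂ zⁿ · g(z) dA(z) = 0 for every integer n ∈ ℤ (for n < 0 the integrand zⁿ g(z) is interpreted as 0 at z = 0, which is harmless since g vanishes near 0). (This is the concrete form of the paper's computation H¹_c(ℂ*, 𝒪) ≅ { Σ_{i<0} aᵢ zⁱ } ⊕ { Σ_{j>0} bⱼ wʲ }, with the two summands converging near ∞ and near 0 respectively: the class of g dz̄ in H¹_c(ℂ*, 𝒪) vanishes exactly when all moments over n ∈ ℤ vanish.) -/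

import Mathlib

/-!
If `f` is compactly supported in `ℂ∖{0}`, integration by parts against `zⁿ`, which is holomorphic
near the support of `f`, shows that all moments of `∂̄f` vanish
(`integral_zpow_mul_dbar_eq_zero`).

Conversely, the Cauchy transform `F(z) = π⁻¹ ∫ g(w) / (z - w) dA(w)` is smooth, being the convolution
of `g` with a locally integrable kernel, and solves `∂̄F = g` by the Cauchy–Pompeiu formula
(`integral_inv_mul_dbar`, `dbar_cauchyTransform`). If all moments of `g` vanish, then
`∫ (w / z)ⁿ g(w) / (z - w) dA(w)` does not depend on `n ∈ ℤ` (`integral_zpow_div_mul_eq`). For `|z|`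
large it tends to `0` as `n → +∞`, and for `|z|` small as `n → -∞`, so `F` vanishes near `∞` and
near `0` (`cauchyTransform_eq_zero`).
-/

open MeasureTheory Complex

/-- The Wirtinger derivative `∂̄f(z) = (1/2)(∂f/∂x + i ∂f/∂y)(z)`. -/
noncomputable def dbar (f : ℂ → ℂ) (z : ℂ) : ℂ :=
  (1 / 2 : ℂ) * ((fderiv ℝ f z) 1 + Complex.I • (fderiv ℝ f z) Complex.I)

open Set Filter Topology

/-- A factor that is regular only near the support of `h` is harmless: this covers both `zⁿ`
with `n < 0`, singular at `0`, and the Cauchy kernel `(z - w)⁻¹` for `z` off the support. -/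
theorem integrable_mul_of_continuousAt_tsupport {φ h : ℂ → ℂ} (hh : Continuous h)
    (hc : HasCompactSupport h) (hφ : ∀ w ∈ tsupport h, ContinuousAt φ w) :
    Integrable (fun w => φ w * h w) := by
  refine Continuous.integrable_of_hasCompactSupport ?_ (hc.mul_left)
  refine continuous_iff_continuousAt.2 fun w => ?_
  by_cases hw : w ∈ tsupport h
  · exact (hφ w hw).mul hh.continuousAt
  · have h0 : (fun w => φ w * h w) =ᶠ[𝓝 w] fun _ => 0 := by
      filter_upwards [notMem_tsupport_iff_eventuallyEq.1 hw] with x hx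
      simp [hx]
    exact continuousAt_const.congr h0.symm

/-- Integration by parts: `zⁿ` is holomorphic on a neighbourhood of the support of `f`, so the
moments of `∂̄f` vanish. -/
theorem integral_zpow_mul_dbar_eq_zero {f : ℂ → ℂ} (hf : ContDiff ℝ 1 f)
    (hc : HasCompactSupport f) (h0 : tsupport f ⊆ {(0 : ℂ)}ᶜ) (n : ℤ) :
    ∫ z : ℂ, z ^ n * dbar f z = 0 := by
  have hne : ∀ w ∈ tsupport f, w ≠ 0 := fun w hw => h0 hw
  have hD : ∀ w : ℂ, w ≠ 0 → HasFDerivAt (𝕜 := ℝ) (fun z : ℂ => z ^ n)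
      (((n * w ^ (n - 1) : ℂ) • (1 : ℂ →L[ℂ] ℂ)).restrictScalars ℝ) w := fun w hw => by
    have := ((hasDerivAt_zpow n w (Or.inl hw)).complexToReal_fderiv)
    refine this.congr_fderiv ?_
    ext; all_goals simp
  have hDv : ∀ v w : ℂ, fderiv ℝ (fun z : ℂ => z ^ n) w v * f w
      = (n * w ^ (n - 1) * v) * f w := fun v w => by
    by_cases hw : w ∈ tsupport f
    · rw [(hD w (hne w hw)).fderiv]; simp
    · simp [image_eq_zero_of_notMem_tsupport hw]
  have hcont : ∀ (m : ℤ), ∀ w ∈ tsupport f, ContinuousAt (fun z : ℂ => z ^ m) w :=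
    fun m w hw => continuousAt_zpow₀ w m (Or.inl (hne w hw))
  have hsub : ∀ v : ℂ, tsupport (fun z => fderiv ℝ f z v) ⊆ tsupport f := fun v =>
    tsupport_fderiv_apply_subset ℝ v
  have hint : ∀ v : ℂ, Integrable (fun z : ℂ => z ^ n * fderiv ℝ f z v) := fun v =>
    integrable_mul_of_continuousAt_tsupport
      ((hf.continuous_fderiv (by simp)).clm_apply continuous_const)
      (hc.fderiv_apply ℝ v) fun w hw => hcont n w (hsub v hw)
  have key : ∀ v : ℂ, ∫ z : ℂ, z ^ n * fderiv ℝ f z v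
      = -((∫ z : ℂ, (n * z ^ (n - 1)) * f z) * v) := fun v => by
    rw [integral_mul_fderiv_eq_neg_fderiv_mul_of_integrable _ (hint v)
      (integrable_mul_of_continuousAt_tsupport hf.continuous hc (hcont n))
      (fun w hw => (hD w (hne w hw)).differentiableAt)
      (fun w _ => hf.differentiable (by simp) w)]
    · rw [← integral_mul_const]
      congr 1
      refine integral_congr_ae (.of_forall fun w => ?_)
      simp only [hDv]; ring
    · simp only [hDv]
      exact integrable_mul_of_continuousAt_tsupport hf.continuous hc
        fun w hw => (continuousAt_const.mul (hcont _ w hw)).mul continuousAt_const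
  calc ∫ z : ℂ, z ^ n * dbar f z
      = ∫ z : ℂ, (1 / 2 : ℂ) * (z ^ n * fderiv ℝ f z 1 + I * (z ^ n * fderiv ℝ f z I)) := by
        refine integral_congr_ae (.of_forall fun w => ?_)
        simp only [dbar, smul_eq_mul]; ring
    _ = 0 := by
        rw [integral_const_mul, integral_add (hint 1) ((hint I).const_mul I),
          integral_const_mul, key, key]
        linear_combination (-1 / 2 * ∫ z : ℂ, (n * z ^ (n - 1)) * f z) * I_mul_I

/-- The Cauchy kernel is locally integrable since its order of growth `1` is less than the real
dimension `2`. -/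
theorem locallyIntegrable_inv : LocallyIntegrable (fun w : ℂ => w⁻¹) := by
  refine locallyIntegrable_of_norm_le_rpow (C := 1) (α := 1) ?_ ?_ ?_ ?_
  · simp
  · simp
  · exact .of_forall fun w => by simp [Real.rpow_neg_one]
  · exact measurable_inv.aestronglyMeasurable

/-- The Cauchy–Pompeiu formula at the origin for compactly supported functions. In polar
coordinates `∂̄ = (e^{iθ} / 2) (∂_r + (i / r) ∂_θ)`, and multiplying by the Jacobian `r` and by
`w⁻¹ = e^{-iθ} / r` turns the integrand into `(∂_r u + (i / r) ∂_θ u) / 2`; the first term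
integrates along rays to `-u(0)` and the second along circles to `0`. -/
theorem integral_inv_mul_dbar {u : ℂ → ℂ} (hu : ContDiff ℝ 1 u) (hc : HasCompactSupport u) :
    ∫ w : ℂ, w⁻¹ * dbar u w = -(Real.pi * u 0) := by
  obtain ⟨R, hR0, hR⟩ := hc.isBounded.exists_pos_norm_lt
  have hD : Continuous (fderiv ℝ u) := hu.continuous_fderiv (by simp)
  -- `e θ = exp (iθ)`, in the form used by `Complex.polarCoord`; `A` is `∂_r u` and `B` is
  -- `r⁻¹ ∂_θ u`, written through the Fréchet derivative so as to be continuous up to `r = 0`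
  set e : ℝ → ℂ := fun θ => Real.cos θ + Real.sin θ * I with he
  have hec : Continuous e := by fun_prop
  have hpc : Continuous fun p : ℝ × ℝ => (p.1 : ℂ) * e p.2 := by fun_prop
  set A : ℝ × ℝ → ℂ := fun p => fderiv ℝ u (p.1 * e p.2) (e p.2) with hA
  set B : ℝ × ℝ → ℂ := fun p => fderiv ℝ u (p.1 * e p.2) (I * e p.2) with hB
  have hAc : Continuous A := (hD.comp hpc).clm_apply (by fun_prop)
  have hBc : Continuous B := (hD.comp hpc).clm_apply (by fun_prop)
  have hnorm : ∀ θ, ‖e θ‖ = 1 := fun θ => by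
    simp only [he, ofReal_cos, ofReal_sin, ← exp_mul_I, norm_exp_ofReal_mul_I]
  have hzero : ∀ r θ : ℝ, R ≤ r → u (r * e θ) = 0 ∧ fderiv ℝ u (r * e θ) = 0 := fun r θ hr => by
    have : (r : ℂ) * e θ ∉ tsupport u := fun h => by
      have := hR _ h
      rw [norm_mul, hnorm, norm_real, mul_one, Real.norm_eq_abs] at this
      linarith [le_abs_self r]
    exact ⟨image_eq_zero_of_notMem_tsupport this,
      image_eq_zero_of_notMem_tsupport fun h => this (tsupport_fderiv_subset ℝ h)⟩
  have hdec : ∀ p : ℝ × ℝ, p.1 ≠ 0 →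
      p.1 • ((p.1 * e p.2 : ℂ)⁻¹ * dbar u (p.1 * e p.2)) = (1 / 2 : ℂ) * (A p + I * B p) := by
    intro p hp
    have hp' : (p.1 : ℂ) ≠ 0 := by exact_mod_cast hp
    have he0 : e p.2 ≠ 0 := fun h => by simpa [h] using hnorm p.2
    have hcs : (Real.cos p.2 : ℂ) ^ 2 + (Real.sin p.2 : ℂ) ^ 2 = 1 := by
      exact_mod_cast Real.cos_sq_add_sin_sq p.2
    have h1 : ∀ (L : ℂ →L[ℝ] ℂ) (a b : ℝ), L (a + b * I) = a * L 1 + b * L I := fun L a b => by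
      have : (a + b * I : ℂ) = a • (1 : ℂ) + b • I := by simp
      rw [this, map_add, map_smul, map_smul]; simp
    have hIe : I * e p.2 = ((-Real.sin p.2 : ℝ) : ℂ) + (Real.cos p.2 : ℝ) * I := by
      simp only [he, ofReal_neg]; linear_combination (Real.sin p.2 : ℂ) * I_mul_I
    simp only [hA, hB, dbar, hIe]
    generalize fderiv ℝ u (p.1 * e p.2) = L
    have h2 : L (e p.2) = Real.cos p.2 * L 1 + Real.sin p.2 * L I := h1 L _ _
    rw [h2, h1]
    rw [real_smul, smul_eq_mul, mul_inv, mul_assoc, mul_inv_cancel_left₀ hp',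
      inv_mul_eq_iff_eq_mul₀ he0]
    simp only [he, ofReal_neg]
    linear_combination (-1 / 2 * (L 1 + I * L I)) * hcs
      + (1/2 * ((Real.sin p.2 : ℂ) ^ 2 * L 1 - Real.sin p.2 * Real.cos p.2 * L I)) * I_mul_I
  have hfin : ∀ {f : ℝ × ℝ → ℂ}, Continuous f →
      IntegrableOn f (Ioc 0 R ×ˢ Ioo (-Real.pi) Real.pi) := fun hf =>
    (hf.continuousOn.integrableOn_compact (isCompact_Icc.prod isCompact_Icc)).mono_set
      (prod_mono Ioc_subset_Icc_self Ioo_subset_Icc_self)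
  -- the radial part, integrated along rays
  have hIA : ∫ p in Ioc 0 R ×ˢ Ioo (-Real.pi) Real.pi, A p = -(2 * Real.pi * u 0) := by
    have hray : ∀ θ, ∫ r in Ioc 0 R, A (r, θ) = -u 0 := fun θ => by
      rw [← intervalIntegral.integral_of_le hR0.le,
        intervalIntegral.integral_eq_sub_of_hasDerivAt
          (f := fun r : ℝ => u (r * e θ))]
      · simp [(hzero R θ le_rfl).1]
      · intro r _
        have h1 : HasDerivAt (fun r : ℝ => (r : ℂ) * e θ) (e θ) r := by
          simpa using (ofRealCLM.hasDerivAt (x := r)).mul_const (e θ)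
        exact ((hu.differentiable (by simp) _).hasFDerivAt).comp_hasDerivAt r h1
      · exact (hAc.comp (by fun_prop)).intervalIntegrable _ _
    have := hfin hAc
    rw [Measure.volume_eq_prod] at this ⊢
    have hsw : IntegrableOn (fun p : ℝ × ℝ => A p.swap) (Ioo (-Real.pi) Real.pi ×ˢ Ioc 0 R)
      (volume.prod volume) := this.swap
    rw [← setIntegral_prod_swap, setIntegral_prod _ hsw]
    simp only [Prod.swap_prod_mk, hray]
    rw [setIntegral_const]
    simp only [Real.volume_real_Ioo_of_le (neg_le_self Real.pi_pos.le), real_smul]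
    push_cast
    ring
  -- the angular part, integrated along circles
  have hIB : ∫ p in Ioc 0 R ×ˢ Ioo (-Real.pi) Real.pi, B p = 0 := by
    have := hfin hBc
    rw [Measure.volume_eq_prod] at this ⊢
    rw [setIntegral_prod _ this]
    refine setIntegral_eq_zero_of_forall_eq_zero fun r hr => ?_
    have hr0 : (r : ℂ) ≠ 0 := by exact_mod_cast hr.1.ne'
    have h2 : ∫ θ in Ioo (-Real.pi) Real.pi, (r : ℂ) * B (r, θ) = 0 := by
      rw [← integral_Ioc_eq_integral_Ioo,
        ← intervalIntegral.integral_of_le (by linarith [Real.pi_pos]),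
        intervalIntegral.integral_eq_sub_of_hasDerivAt
          (f := fun θ : ℝ => u (r * e θ))]
      · simp [he]
      · intro θ _
        have h1 : HasDerivAt e (I * e θ) θ := by
          have := ((Real.hasDerivAt_cos θ).ofReal_comp).add
            (((Real.hasDerivAt_sin θ).ofReal_comp).mul_const I)
          refine this.congr_deriv ?_
          simp only [he, ofReal_neg]; linear_combination -(Real.sin θ : ℂ) * I_mul_I
        have h3 := ((hu.differentiable (by simp) (r * e θ)).hasFDerivAt).comp_hasDerivAt θ
          (h1.const_mul (r : ℂ))
        refine h3.congr_deriv ?_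
        rw [← real_smul (x := r) (z := I * e θ), map_smul, real_smul]
      · exact (continuous_const.mul (hBc.comp (by fun_prop))).intervalIntegrable _ _
    rw [integral_const_mul] at h2
    exact (mul_eq_zero.1 h2).resolve_left hr0
  have hms : MeasurableSet (Ioi (0:ℝ) ×ˢ Ioo (-Real.pi) Real.pi) :=
    measurableSet_Ioi.prod measurableSet_Ioo
  calc ∫ w : ℂ, w⁻¹ * dbar u w
      = ∫ p in Ioi (0:ℝ) ×ˢ Ioo (-Real.pi) Real.pi, (1 / 2 : ℂ) * (A p + I * B p) := by
        rw [← Complex.integral_comp_polarCoord_symm, polarCoord_target]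
        refine setIntegral_congr_fun hms fun p hp => ?_
        simp only [Complex.polarCoord_symm_apply]
        exact hdec p (ne_of_gt hp.1)
    _ = ∫ p in Ioc 0 R ×ˢ Ioo (-Real.pi) Real.pi, (1 / 2 : ℂ) * (A p + I * B p) := by
        refine (setIntegral_eq_of_subset_of_forall_sdiff_eq_zero hms
          (prod_mono Ioc_subset_Ioi_self Subset.rfl) fun p hp => ?_)
        have : R ≤ p.1 := by
          by_contra! h
          exact hp.2 ⟨⟨hp.1.1, h.le⟩, hp.1.2⟩
        simp [hA, hB, (hzero p.1 p.2 this).2]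
    _ = -(Real.pi * u 0) := by
        rw [integral_const_mul, integral_add (hfin hAc) ((hfin hBc).const_mul I),
          integral_const_mul, hIA, hIB]
        ring

/-- The Cauchy transform `z ↦ π⁻¹ ∫ g(w) / (z - w) dA(w)`, written as a convolution with the kernel
`w⁻¹` so that derivatives fall on `g`. -/
noncomputable def cauchyTransform (g : ℂ → ℂ) (z : ℂ) : ℂ :=
  (Real.pi : ℂ)⁻¹ * ∫ w : ℂ, w⁻¹ * g (z - w)

open scoped Convolution in
theorem cauchyTransform_eq_convolution (g : ℂ → ℂ) :
    cauchyTransform g = fun z =>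
      (Real.pi : ℂ)⁻¹ * ((fun w : ℂ => w⁻¹) ⋆[ContinuousLinearMap.mul ℝ ℂ, volume] g) z := rfl

theorem contDiff_cauchyTransform {g : ℂ → ℂ} (hg : ContDiff ℝ (⊤ : ℕ∞) g)
    (hc : HasCompactSupport g) : ContDiff ℝ (⊤ : ℕ∞) (cauchyTransform g) := by
  rw [cauchyTransform_eq_convolution]
  exact contDiff_const.mul (hc.contDiff_convolution_right _ locallyIntegrable_inv hg)

/-- The Cauchy transform is a right inverse of `∂̄` on compactly supported functions. -/
theorem dbar_cauchyTransform {g : ℂ → ℂ} (hg : ContDiff ℝ 1 g) (hc : HasCompactSupport g) (z : ℂ) :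
    dbar (cauchyTransform g) z = g z := by
  have hDc : Continuous (fderiv ℝ g) := hg.continuous_fderiv (by simp)
  have hv : ∀ v : ℂ, fderiv ℝ (cauchyTransform g) z v
      = (Real.pi : ℂ)⁻¹ * ∫ w : ℂ, w⁻¹ * fderiv ℝ g (z - w) v := fun v => by
    have := (hc.hasFDerivAt_convolution_right (ContinuousLinearMap.mul ℝ ℂ)
      locallyIntegrable_inv hg z).const_mul (Real.pi : ℂ)⁻¹
    rw [cauchyTransform_eq_convolution, this.fderiv, smul_apply,
      convolution_precompR_apply _ locallyIntegrable_inv (hc.fderiv ℝ) hDc]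
    rfl
  have hint : ∀ v : ℂ, Integrable (fun w : ℂ => w⁻¹ * fderiv ℝ g (z - w) v) := fun v =>
    (hc.fderiv_apply ℝ v).convolutionExists_right (ContinuousLinearMap.mul ℝ ℂ)
      locallyIntegrable_inv (hDc.clm_apply continuous_const) z
  -- the Pompeiu formula is applied to the reflected translate of `g`
  have hP := integral_inv_mul_dbar (u := fun w => g (z - w))
    (hg.comp (contDiff_const.sub contDiff_id)) (hc.comp_homeomorph (Homeomorph.subLeft z))
  have hdu : ∀ w v : ℂ, fderiv ℝ (fun w => g (z - w)) w v = -fderiv ℝ g (z - w) v := fun w v => by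
    have h1 : HasFDerivAt (fun w : ℂ => z - w) (-ContinuousLinearMap.id ℝ ℂ) w :=
      (hasFDerivAt_id w).const_sub z
    have := ((hg.differentiable (by simp) (z - w)).hasFDerivAt).comp w h1
    have h2 : fderiv ℝ (fun w => g (z - w)) w = _ := this.fderiv
    rw [h2]; simp
  have hsplit : ∫ w : ℂ, w⁻¹ * dbar (fun w => g (z - w)) w
      = -(1 / 2 : ℂ) * ((∫ w : ℂ, w⁻¹ * fderiv ℝ g (z - w) 1)
        + I * ∫ w : ℂ, w⁻¹ * fderiv ℝ g (z - w) I) := by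
    rw [← integral_const_mul, ← integral_add (hint 1) ((hint I).const_mul I),
      ← integral_const_mul]
    refine integral_congr_ae (.of_forall fun w => ?_)
    simp only [dbar, hdu, smul_eq_mul]; ring
  rw [hsplit, sub_zero] at hP
  have hpi : (Real.pi : ℂ) ≠ 0 := by exact_mod_cast Real.pi_ne_zero
  rw [dbar, hv, hv, smul_eq_mul]
  linear_combination (-(Real.pi : ℂ)⁻¹) * hP + g z * inv_mul_cancel₀ hpi

theorem cauchyTransform_eq (g : ℂ → ℂ) (z : ℂ) :
    cauchyTransform g z = (Real.pi : ℂ)⁻¹ * ∫ w : ℂ, (z - w)⁻¹ * g w := by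
  rw [cauchyTransform, ← integral_sub_left_eq_self _ volume z]
  simp

theorem tendsto_integral_pow_mul {q K : ℂ → ℂ} (hK : Integrable K) (hq : Measurable q)
    (hlt : ∀ w, K w ≠ 0 → ‖q w‖ < 1) :
    Tendsto (fun n : ℕ => ∫ w, q w ^ n * K w) atTop (𝓝 0) := by
  have : ∫ _ : ℂ, (0 : ℂ) = 0 := by simp
  rw [← this]
  refine tendsto_integral_of_dominated_convergence (fun w => ‖K w‖)
    (fun n => (hq.pow_const n).aestronglyMeasurable.mul hK.1) hK.norm
    (fun n => .of_forall fun w => ?_) (.of_forall fun w => ?_)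
  · by_cases h : K w = 0
    · simp [h]
    · rw [norm_mul, norm_pow]
      exact mul_le_of_le_one_left (norm_nonneg _) (pow_le_one₀ (norm_nonneg _) (hlt w h).le)
  · by_cases h : K w = 0
    · simp [h]
    · simpa using (tendsto_pow_atTop_nhds_zero_of_norm_lt_one (hlt w h)).mul_const (K w)

/-- Since `(1 - w / z) (z - w)⁻¹ = z⁻¹`, raising the exponent of `w / z` by one changes the
integral by a multiple of a moment of `g`, which is zero. -/
theorem integral_zpow_div_mul_eq {g : ℂ → ℂ} (hg : Continuous g) (hc : HasCompactSupport g)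
    (hg0 : tsupport g ⊆ {(0 : ℂ)}ᶜ) (hm : ∀ n : ℤ, (∫ z : ℂ, z ^ n * g z) = 0)
    {z : ℂ} (hz0 : z ≠ 0) (hz : z ∉ tsupport g) (n : ℤ) :
    ∫ w : ℂ, (w / z) ^ n * ((z - w)⁻¹ * g w) = ∫ w : ℂ, (z - w)⁻¹ * g w := by
  have hint : ∀ n : ℤ, Integrable fun w : ℂ => (w / z) ^ n * ((z - w)⁻¹ * g w) := fun n => by
    simp only [← mul_assoc]
    refine integrable_mul_of_continuousAt_tsupport hg hc fun w hw => ?_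
    have hw0 : w ≠ 0 := hg0 hw
    have hzw : z - w ≠ 0 := sub_ne_zero.2 fun h => hz (h ▸ hw)
    exact ((continuousAt_id.div_const z).zpow₀ n (Or.inl (div_ne_zero hw0 hz0))).mul
      ((continuousAt_const.sub continuousAt_id).inv₀ hzw)
  have hstep : ∀ n : ℤ, ∫ w : ℂ, (w / z) ^ n * ((z - w)⁻¹ * g w)
      = ∫ w : ℂ, (w / z) ^ (n + 1) * ((z - w)⁻¹ * g w) := fun n => by
    rw [← sub_eq_zero, ← integral_sub (hint n) (hint (n + 1))]
    have : ∀ w : ℂ, (w / z) ^ n * ((z - w)⁻¹ * g w) - (w / z) ^ (n + 1) * ((z - w)⁻¹ * g w)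
        = (z ^ (n + 1))⁻¹ * (w ^ n * g w) := fun w => by
      by_cases hw : w ∈ tsupport g
      · have hw0 : w ≠ 0 := hg0 hw
        have hzw : z - w ≠ 0 := sub_ne_zero.2 fun h => hz (h ▸ hw)
        rw [zpow_add_one₀ (div_ne_zero hw0 hz0), zpow_add_one₀ hz0, div_zpow]
        field_simp
      · simp [image_eq_zero_of_notMem_tsupport hw]
    simp only [this]
    rw [integral_const_mul, hm, mul_zero]
  induction n with
  | zero => simp
  | succ n ih => rw [← hstep, ih]
  | pred n ih => rw [hstep, sub_add_cancel, ih]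

/-- If all moments of `g` vanish, its Cauchy transform vanishes at every `z` closer to `0`, or farther
from `0`, than the whole support of `g`: for `z ≠ 0` the powers `(w / z)ⁿ` tend to `0` on the support
as `n → -∞`, respectively `n → +∞`, while inserting them does not change the integral. -/
theorem cauchyTransform_eq_zero {g : ℂ → ℂ} (hg : Continuous g) (hc : HasCompactSupport g)
    (hg0 : tsupport g ⊆ {(0 : ℂ)}ᶜ) (hm : ∀ n : ℤ, (∫ z : ℂ, z ^ n * g z) = 0) {z : ℂ}
    (hz : (∀ w ∈ tsupport g, ‖z‖ < ‖w‖) ∨ (∀ w ∈ tsupport g, ‖w‖ < ‖z‖)) :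
    cauchyTransform g z = 0 := by
  rw [cauchyTransform_eq]
  -- at `z = 0` the transform is, up to a constant, the moment of order `-1`
  rcases eq_or_ne z 0 with rfl | hz0
  · have := hm (-1)
    simp only [zpow_neg_one] at this
    simp [inv_neg, integral_neg, this]
  have hzs : z ∉ tsupport g := fun h => by
    rcases hz with hz | hz <;> exact lt_irrefl _ (hz z h)
  have hJ := integral_zpow_div_mul_eq hg hc hg0 hm hz0 hzs
  have hK : Integrable fun w : ℂ => (z - w)⁻¹ * g w :=
    integrable_mul_of_continuousAt_tsupport hg hc fun w hw =>
      (continuousAt_const.sub continuousAt_id).inv₀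
        (sub_ne_zero.2 fun h : z = w => hzs (h ▸ hw))
  have hmem : ∀ w, (z - w)⁻¹ * g w ≠ 0 → w ∈ tsupport g := fun w hw =>
    subset_tsupport g (right_ne_zero_of_mul hw)
  have hzp : 0 < ‖z‖ := norm_pos_iff.2 hz0
  suffices ∫ w : ℂ, (z - w)⁻¹ * g w = 0 by rw [this, mul_zero]
  rcases hz with hz | hz
  · refine tendsto_nhds_unique tendsto_const_nhds
      ((tendsto_integral_pow_mul hK (q := fun w => (w / z)⁻¹) (by fun_prop) fun w hw => ?_).congr
        fun n => ?_)
    · have := hz w (hmem w hw)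
      rw [inv_div, norm_div]
      exact (div_lt_one (hzp.trans this)).2 this
    · rw [← hJ (-n)]
      simp only [zpow_neg, zpow_natCast, inv_pow]
  · refine tendsto_nhds_unique tendsto_const_nhds
      ((tendsto_integral_pow_mul hK (q := fun w => w / z) (by fun_prop) fun w hw => ?_).congr
        fun n => ?_)
    · rw [norm_div]
      exact (div_lt_one hzp).2 (hz w (hmem w hw))
    · rw [← hJ n]
      simp

/-- For smooth `g : ℂ → ℂ` with compact support contained in `ℂ∖{0}`, the equation
`∂̄f = g` has a smooth solution `f` with compact support contained in `ℂ∖{0}` iff all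
moments `∫ zⁿ g(z) dA(z)` for `n ∈ ℤ` vanish (for `n < 0` the integrand is `0` at
`z = 0`, as `(0 : ℂ) ^ n = 0` for negative `n`).  This expresses the vanishing
criterion for the class of `g dz̄` in `H¹_c(ℂ*, 𝒪)`. -/
theorem dbar_solvable_compact_support_punctured_iff_moments_vanish
    (g : ℂ → ℂ) (hg : ContDiff ℝ (⊤ : ℕ∞) g) (hgc : HasCompactSupport g)
    (hg0 : tsupport g ⊆ {(0 : ℂ)}ᶜ) :
    (∃ f : ℂ → ℂ, ContDiff ℝ (⊤ : ℕ∞) f ∧ HasCompactSupport f ∧ tsupport f ⊆ {(0 : ℂ)}ᶜ ∧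
        ∀ z : ℂ, dbar f z = g z) ↔
    ∀ n : ℤ, (∫ z : ℂ, z ^ n * g z) = 0 := by
  have h1 : (1 : WithTop ℕ∞) ≤ ((⊤ : ℕ∞) : WithTop ℕ∞) := by exact_mod_cast le_top
  constructor
  · rintro ⟨f, hf, hfc, hf0, hfg⟩ n
    simp only [← hfg]
    exact integral_zpow_mul_dbar_eq_zero (hf.of_le h1) hfc hf0 n
  · intro hm
    refine ⟨cauchyTransform g, contDiff_cauchyTransform hg hgc, ?_, ?_,
      dbar_cauchyTransform (hg.of_le h1) hgc⟩
    · obtain ⟨R, -, hR⟩ := hgc.isBounded.exists_pos_norm_lt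
      refine HasCompactSupport.intro (isCompact_closedBall (0 : ℂ) R) fun z hz => ?_
      rw [mem_closedBall_zero_iff, not_le] at hz
      exact cauchyTransform_eq_zero hg.continuous hgc hg0 hm
        (Or.inr fun w hw => (hR w hw).trans hz)
    · have h0 : (tsupport g)ᶜ ∈ 𝓝 (0 : ℂ) :=
        (isClosed_tsupport g).isOpen_compl.mem_nhds fun h => hg0 h rfl
      obtain ⟨ε, hε, hball⟩ := Metric.mem_nhds_iff.1 h0
      have : (0 : ℂ) ∉ tsupport (cauchyTransform g) := by
        rw [notMem_tsupport_iff_eventuallyEq]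
        filter_upwards [Metric.ball_mem_nhds (0 : ℂ) hε] with z hz
        refine cauchyTransform_eq_zero hg.continuous hgc hg0 hm (Or.inl fun w hw => ?_)
        rw [mem_ball_zero_iff] at hz
        by_contra! h
        exact hball (mem_ball_zero_iff.2 (h.trans_lt hz)) hw
      exact subset_compl_singleton_iff.2 this
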